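/- For every fixed σ > 0, g(x; σ²) → 1 as x → +∞. (Consequently, for ‖x₀‖₀ = S the constrained Barankin bound BB_c(x₀) = S σ² + (N − S) σ² · (1 − ∏_{l ∈ supp(x₀)} g(x₀_l; σ²)) converges to S σ² as the smallest-magnitude nonzero entry ξ₀ = min_{k ∈ supp(x₀)} |x₀_k| tends to infinity, i.e., in the high-SNR regime.) -/

import Mathlib

open MeasureTheory ProbabilityTheory Filter
open scoped ENNReal Classical

/-- The product Gaussian measure `P_x` on `ℝ^N` with mean `x` and variance `σ²` per coordinate. -/
noncomputable def gaussP (N : ℕ) (σ : ℝ) (x : Fin N → ℝ) : Measure (Fin N → ℝ) :=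
  MeasureTheory.Measure.pi fun i => gaussianReal (x i) (Real.toNNReal (σ ^ 2))

/-- The support of `x`: indices with nonzero entries. Its cardinality is `‖x‖₀`. -/
noncomputable def supp {N : ℕ} (x : Fin N → ℝ) : Finset (Fin N) :=
  Finset.univ.filter fun i => x i ≠ 0

/-- The sparse parameter set `X_S = {x : ‖x‖₀ ≤ S}`. -/
def sparseSet (N S : ℕ) : Set (Fin N → ℝ) := {x | (supp x).card ≤ S}

/-- An estimator is unbiased if each component is `P_x`-integrable with mean `x i`
for every `x ∈ X_S`. -/
def Unbiased (N S : ℕ) (σ : ℝ) (est : (Fin N → ℝ) → Fin N → ℝ) : Prop :=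
  ∀ x ∈ sparseSet N S, ∀ i,
    Integrable (fun y => est y i) (gaussP N σ x) ∧
    (∫ y, est y i ∂gaussP N σ x) = x i

/-- The MSE `ε(x; x̂) = ∫ ‖x̂(y) − x‖₂² dP_x(y)`, as an extended real. -/
noncomputable def MSE (N : ℕ) (σ : ℝ) (est : (Fin N → ℝ) → Fin N → ℝ)
    (x : Fin N → ℝ) : ℝ≥0∞ :=
  ∫⁻ y, ENNReal.ofReal (∑ i, (est y i - x i) ^ 2) ∂gaussP N σ x

/-- `g(x; σ²) = (2/√(2πσ²)) ∫₀^∞ exp(−(y²+x²)/(2σ²)) sinh(yx/σ²) tanh(yx/σ²) dy`. -/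
noncomputable def g (σ x : ℝ) : ℝ :=
  (2 / Real.sqrt (2 * Real.pi * σ ^ 2)) *
    ∫ y in Set.Ioi (0 : ℝ),
      Real.exp (-(y ^ 2 + x ^ 2) / (2 * σ ^ 2)) * Real.sinh (y * x / σ ^ 2) *
        Real.tanh (y * x / σ ^ 2)

/-! Since `tanh` is odd, reflecting the negative half-line onto the positive one identifies
`g(x; σ²)` with `𝔼 [tanh (Y x / σ²)]` for `Y ∼ N(x, σ²)`. Writing `Y = Z + x` with `Z ∼ N(0, σ²)`,
the argument `(Z + x) x / σ²` tends to `+∞` pointwise as `x → +∞`, so the bounded integrand tends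
to `1` and dominated convergence concludes. -/

open scoped NNReal Topology

theorem tanh_eq_one_sub_two_div (u : ℝ) :
    Real.tanh u = 1 - 2 / (Real.exp (2 * u) + 1) := by
  rw [Real.tanh_eq, Real.exp_neg, two_mul, Real.exp_add]
  field_simp
  ring

theorem continuous_tanh : Continuous Real.tanh := by
  rw [funext Real.tanh_eq_sinh_div_cosh]
  exact Real.continuous_sinh.div Real.continuous_cosh fun u => (Real.cosh_pos u).ne'

theorem tendsto_tanh_atTop : Tendsto Real.tanh atTop (𝓝 1) := by
  have denominator_tendsto : Tendsto (fun u : ℝ => Real.exp (2 * u) + 1) atTop atTop :=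
    tendsto_atTop_add_const_right _ _
      (Real.tendsto_exp_atTop.comp (tendsto_id.const_mul_atTop two_pos))
  simpa only [← tanh_eq_one_sub_two_div, sub_zero] using
    (denominator_tendsto.const_div_atTop 2).const_sub 1

theorem gaussianPDFReal_eq_mul_exp (m : ℝ) (v : ℝ≥0) (y : ℝ) :
    gaussianPDFReal m v y =
      (√(2 * Real.pi * v))⁻¹ * (Real.exp (-(y ^ 2 + m ^ 2) / (2 * v)) * Real.exp (y * m / v)) := by
  rw [gaussianPDFReal, ← Real.exp_add]
  ring_nf

theorem gaussianPDFReal_sub_gaussianPDFReal_neg (m : ℝ) (v : ℝ≥0) (y : ℝ) :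
    gaussianPDFReal m v y - gaussianPDFReal m v (-y) =
      2 / √(2 * Real.pi * v) * (Real.exp (-(y ^ 2 + m ^ 2) / (2 * v)) * Real.sinh (y * m / v)) := by
  rw [gaussianPDFReal_eq_mul_exp, gaussianPDFReal_eq_mul_exp, neg_sq, neg_mul,
    neg_div (v : ℝ) (y * m), Real.sinh_eq]
  ring

section Integral

variable {E : Type*} [NormedAddCommGroup E] [NormedSpace ℝ E]

theorem integral_eq_integral_Ioi_comp_neg_add {f : ℝ → E} (hf : Integrable f) :
    ∫ y, f y = ∫ y in Set.Ioi (0 : ℝ), (f (-y) + f y) := by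
  rw [integral_add hf.comp_neg.integrableOn hf.integrableOn, integral_comp_neg_Ioi, neg_zero,
    intervalIntegral.integral_Iic_add_Ioi hf.integrableOn hf.integrableOn]

theorem tendsto_integral_comp_of_norm_le [CompleteSpace E] {Ω ι β : Type*}
    {mΩ : MeasurableSpace Ω} {μ : Measure Ω} [IsProbabilityMeasure μ] {l : Filter ι}
    [l.IsCountablyGenerated] {lβ : Filter β} {X : ι → Ω → β} {φ : β → E} {c : E} {C : ℝ}
    (hφX : ∀ i, AEStronglyMeasurable (fun ω => φ (X i ω)) μ) (hφ_bound : ∀ b, ‖φ b‖ ≤ C)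
    (hφ : Tendsto φ lβ (𝓝 c)) (hX : ∀ᵐ ω ∂μ, Tendsto (fun i => X i ω) l lβ) :
    Tendsto (fun i => ∫ ω, φ (X i ω) ∂μ) l (𝓝 c) := by
  have dominated : Tendsto (fun i => ∫ ω, φ (X i ω) ∂μ) l (𝓝 (∫ _, c ∂μ)) :=
    tendsto_integral_filter_of_dominated_convergence (fun _ => C) (.of_forall hφX)
      (.of_forall fun i => .of_forall fun ω => hφ_bound (X i ω)) (integrable_const C)
      (hX.mono fun _ hω => hφ.comp hω)
  simpa using dominated

theorem integrable_gaussianReal_iff_integrable_smul {m : ℝ} {v : ℝ≥0} (hv : v ≠ 0) {f : ℝ → E} :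
    Integrable f (gaussianReal m v) ↔ Integrable fun y => gaussianPDFReal m v y • f y := by
  rw [gaussianReal_of_var_ne_zero m hv, integrable_withDensity_iff_integrable_smul'
    (measurable_gaussianPDF m v) (.of_forall fun _ => gaussianPDF_lt_top)]
  simp only [toReal_gaussianPDF]

theorem integral_gaussianReal_eq_integral_comp_add {m : ℝ} {v : ℝ≥0} (f : ℝ → E) :
    ∫ y, f y ∂gaussianReal m v = ∫ z, f (z + m) ∂gaussianReal 0 v := by
  rw [← (measurableEmbedding_addRight m).integral_map, gaussianReal_map_add_const, zero_add]

theorem tendsto_integral_gaussianReal_comp_mul [CompleteSpace E] {ι : Type*} {l : Filter ι}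
    [l.IsCountablyGenerated] {m a : ι → ℝ} {φ : ℝ → E} {c : E} {C : ℝ} (v : ℝ≥0)
    (hφ_meas : StronglyMeasurable φ) (hφ_bound : ∀ y, ‖φ y‖ ≤ C) (hφ : Tendsto φ atTop (𝓝 c))
    (hm : Tendsto m l atTop) (ha : Tendsto a l atTop) :
    Tendsto (fun i => ∫ y, φ (y * a i) ∂gaussianReal (m i) v) l (𝓝 c) := by
  simp only [integral_gaussianReal_eq_integral_comp_add fun y => φ (y * a _)]
  have argument_tendsto (z : ℝ) : Tendsto (fun i => (z + m i) * a i) l atTop :=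
    (tendsto_atTop_add_const_left l z hm).atTop_mul_atTop₀ ha
  exact tendsto_integral_comp_of_norm_le
    (fun i => (hφ_meas.comp_measurable (by fun_prop)).aestronglyMeasurable) hφ_bound hφ
    (.of_forall argument_tendsto)

theorem integral_gaussianReal_of_odd {m : ℝ} {v : ℝ≥0} (hv : v ≠ 0) {f : ℝ → E}
    (hf : Integrable f (gaussianReal m v)) (hf_odd : Function.Odd f) :
    ∫ y, f y ∂gaussianReal m v = (2 / √(2 * Real.pi * v)) • ∫ y in Set.Ioi (0 : ℝ),
      (Real.exp (-(y ^ 2 + m ^ 2) / (2 * v)) * Real.sinh (y * m / v)) • f y := by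
  have reflect (y : ℝ) : gaussianPDFReal m v (-y) • f (-y) + gaussianPDFReal m v y • f y =
      (gaussianPDFReal m v y - gaussianPDFReal m v (-y)) • f y := by
    rw [hf_odd y]
    module
  rw [integral_gaussianReal_eq_integral_smul hv,
    integral_eq_integral_Ioi_comp_neg_add ((integrable_gaussianReal_iff_integrable_smul hv).mp hf)]
  simp only [reflect, gaussianPDFReal_sub_gaussianPDFReal_neg, mul_smul, integral_smul]

end Integral

theorem g_eq_integral_tanh_gaussianReal {σ : ℝ} (hσ : σ ≠ 0) (x : ℝ) :
    g σ x = ∫ y, Real.tanh (y * (x / σ ^ 2)) ∂gaussianReal x (σ ^ 2).toNNReal := by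
  have variance_ne_zero : (σ ^ 2).toNNReal ≠ 0 := by positivity
  have tanh_integrable : Integrable (fun y => Real.tanh (y * (x / σ ^ 2)))
      (gaussianReal x (σ ^ 2).toNNReal) :=
    .of_bound (continuous_tanh.comp (by fun_prop)).aestronglyMeasurable 1
      (.of_forall fun _ => (Real.abs_tanh_lt_one _).le)
  have tanh_odd : Function.Odd fun y => Real.tanh (y * (x / σ ^ 2)) := fun y => by
    simp only [neg_mul, Real.tanh_neg]
  rw [integral_gaussianReal_of_odd variance_ne_zero tanh_integrable tanh_odd]
  simp only [g, Real.coe_toNNReal _ (sq_nonneg σ), smul_eq_mul, mul_div_assoc]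

/-- High-SNR limit: for fixed `σ > 0`, `g(x; σ²) → 1` as `x → +∞`. -/
theorem stmt_15 (σ : ℝ) (hσ : 0 < σ) :
    Filter.Tendsto (fun x => g σ x) Filter.atTop (nhds 1) := by
  simp only [g_eq_integral_tanh_gaussianReal hσ.ne']
  exact tendsto_integral_gaussianReal_comp_mul (σ ^ 2).toNNReal
    continuous_tanh.stronglyMeasurable (fun u => (Real.abs_tanh_lt_one u).le)
    tendsto_tanh_atTop tendsto_id (tendsto_id.atTop_div_const (pow_pos hσ 2))
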